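/- Let A be a (possibly noncommutative) ring and let h be an element of the center of A such that h^N = 0 for some natural number N and such that the quotient ring A₀ := A/(h) by the two-sided ideal generated by h is commutative; let π : A → A₀ be the quotient map. Let S̄ be a multiplicative submonoid of A₀ with 0 ∉ S̄. Then the multiplicative subset S := π⁻¹(S̄) of A satisfies all four Ore conditions: (i) for all a ∈ A and s ∈ S there exist b ∈ A and t ∈ S with t·a = b·s; (ii) for all a ∈ A, if a·s = 0 for some s ∈ S then t·a = 0 for some t ∈ S; (iii) for all b ∈ A and t ∈ S there exist a ∈ A and s ∈ S with t·a = b·s; (iv) for all a ∈ A, if s·a = 0 for some s ∈ S then a·t = 0 for some t ∈ S. -/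

import Mathlib

/-! For `s ∈ S` let `L` and `R` be left and right multiplication by `s`. They commute and
`ad s = L - R`, so `L ^ n - (ad s) ^ n` and `R ^ n - (-ad s) ^ n` are multiples of `R` and `L`
respectively. Wherever `(ad s) ^ n` vanishes, this gives all four Ore conditions with denominator
`s ^ n`. Commutators lie in `h A` and `h` is central, so `(ad s) ^ n` maps `A` into `h ^ n A`, which
is zero for `n = N`. -/

section CommutingEndomorphisms

variable {R M : Type*} [Semiring R] [AddCommGroup M] [Module R M]
  {f g : Module.End R M} {n : ℕ} {x : M}

theorem pow_apply_mem_range_of_sub_pow_apply_eq_zero (hfg : Commute f g)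
    (hx : ((f - g) ^ n) x = 0) : (f ^ n) x ∈ LinearMap.range g := by
  have hdvd : g ∣ f ^ n - (f - g) ^ n := by
    simpa only [sub_sub_cancel] using ((Commute.refl f).sub_right hfg).sub_dvd_pow_sub_pow n
  obtain ⟨q, hq⟩ := hdvd
  refine ⟨q x, ?_⟩
  rw [← Module.End.mul_apply, ← hq, LinearMap.sub_apply, hx, sub_zero]

theorem sub_pow_apply_eq_pow_apply_of_apply_eq_zero (hfg : Commute f g) (hx : g x = 0) :
    ((f - g) ^ n) x = (f ^ n) x := by
  induction n with
  | zero => simp only [pow_zero]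
  | succ n ih =>
    have hgf : g ((f ^ n) x) = 0 := by
      rw [← Module.End.mul_apply, ← (hfg.pow_left n).eq, Module.End.mul_apply, hx, map_zero]
    rw [pow_succ', pow_succ', Module.End.mul_apply, ih, LinearMap.sub_apply, hgf, sub_zero,
      Module.End.mul_apply]

theorem sub_pow_apply_eq_zero_comm : ((f - g) ^ n) x = 0 ↔ ((g - f) ^ n) x = 0 := by
  rw [← neg_sub g f, neg_pow]
  rcases neg_one_pow_eq_or (Module.End R M) n with h | h <;> simp [h]

end CommutingEndomorphisms

section Adjoint

open LinearMap LieAlgebra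

attribute [local instance] LieRing.ofAssociativeRing

variable {R A : Type*} [CommRing R] [Ring A] [Algebra R A] {s a : A} {n : ℕ}

theorem ad_pow_apply_eq_zero_iff :
    (ad R A s ^ n) a = 0 ↔ ((mulLeft R s - mulRight R s) ^ n) a = 0 := by
  rw [ad_eq_lmul_left_sub_lmul_right, Pi.sub_apply]

theorem exists_pow_mul_eq_mul_of_ad_pow_apply_eq_zero (had : (ad R A s ^ n) a = 0) :
    ∃ b, s ^ n * a = b * s := by
  obtain ⟨b, hb⟩ := pow_apply_mem_range_of_sub_pow_apply_eq_zero
    (commute_mulLeft_right s s) (ad_pow_apply_eq_zero_iff.mp had)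
  exact ⟨b, by simpa only [pow_mulLeft, mulLeft_apply, mulRight_apply] using hb.symm⟩

theorem exists_mul_pow_eq_mul_of_ad_pow_apply_eq_zero (had : (ad R A s ^ n) a = 0) :
    ∃ b, a * s ^ n = s * b := by
  obtain ⟨b, hb⟩ := pow_apply_mem_range_of_sub_pow_apply_eq_zero
    (commute_mulLeft_right s s).symm
    (sub_pow_apply_eq_zero_comm.mp (ad_pow_apply_eq_zero_iff.mp had))
  exact ⟨b, by simpa only [pow_mulRight, mulLeft_apply, mulRight_apply] using hb.symm⟩

theorem pow_mul_eq_zero_of_ad_pow_apply_eq_zero (had : (ad R A s ^ n) a = 0) (has : a * s = 0) :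
    s ^ n * a = 0 := by
  rw [ad_pow_apply_eq_zero_iff,
    sub_pow_apply_eq_pow_apply_of_apply_eq_zero (commute_mulLeft_right s s) has] at had
  simpa only [pow_mulLeft, mulLeft_apply] using had

theorem mul_pow_eq_zero_of_ad_pow_apply_eq_zero (had : (ad R A s ^ n) a = 0) (hsa : s * a = 0) :
    a * s ^ n = 0 := by
  rw [ad_pow_apply_eq_zero_iff, sub_pow_apply_eq_zero_comm,
    sub_pow_apply_eq_pow_apply_of_apply_eq_zero (commute_mulLeft_right s s).symm hsa] at had
  simpa only [pow_mulRight, mulRight_apply] using had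

theorem pow_dvd_ad_pow_apply {h : A} (hs : Commute s h) (hdvd : ∀ x, h ∣ ⁅s, x⁆) :
    h ^ n ∣ (ad R A s ^ n) a := by
  induction n with
  | zero => simp only [pow_zero, one_dvd]
  | succ n ih =>
    obtain ⟨y, hy⟩ := ih
    have hlie : ⁅s, h ^ n * y⁆ = h ^ n * ⁅s, y⁆ := by
      rw [Ring.lie_def, Ring.lie_def, mul_sub, ← mul_assoc, (hs.pow_right n).eq, mul_assoc,
        mul_assoc]
    rw [pow_succ' (ad R A s), Module.End.mul_apply, hy, ad_apply, hlie, pow_succ]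
    exact mul_dvd_mul_left _ (hdvd y)

theorem ad_pow_eq_zero_of_dvd_of_map_eq_zero {B : Type*} [CommRing B] {h : A} (hs : Commute s h)
    (hn : h ^ n = 0) (π : A →+* B) (hker : ∀ x, π x = 0 → h ∣ x) : ad R A s ^ n = 0 := by
  have hdvd (x : A) : h ∣ ⁅s, x⁆ := hker _ <| by
    rw [Ring.lie_def, map_sub, map_mul, map_mul, mul_comm, sub_self]
  ext a
  have hdvd_pow : h ^ n ∣ (ad R A s ^ n) a := pow_dvd_ad_pow_apply hs hdvd
  rwa [hn, zero_dvd_iff] at hdvd_pow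

theorem stmt_0_general (S : Submonoid A) (hS : ∀ s ∈ S, ∀ a, ∃ n, (ad R A s ^ n) a = 0) :
    (∀ a s : A, s ∈ S → ∃ b t : A, t ∈ S ∧ t * a = b * s) ∧
    (∀ a : A, (∃ s : A, s ∈ S ∧ a * s = 0) → ∃ t : A, t ∈ S ∧ t * a = 0) ∧
    (∀ b t : A, t ∈ S → ∃ a s : A, s ∈ S ∧ t * a = b * s) ∧
    (∀ a : A, (∃ s : A, s ∈ S ∧ s * a = 0) → ∃ t : A, t ∈ S ∧ a * t = 0) := by
  refine ⟨fun a s hs ↦ ?_, fun a ⟨s, hs, has⟩ ↦ ?_, fun b t ht ↦ ?_, fun a ⟨s, hs, hsa⟩ ↦ ?_⟩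
  · obtain ⟨n, hn⟩ := hS s hs a
    obtain ⟨b, hb⟩ := exists_pow_mul_eq_mul_of_ad_pow_apply_eq_zero hn
    exact ⟨b, s ^ n, pow_mem hs n, hb⟩
  · obtain ⟨n, hn⟩ := hS s hs a
    exact ⟨s ^ n, pow_mem hs n, pow_mul_eq_zero_of_ad_pow_apply_eq_zero hn has⟩
  · obtain ⟨n, hn⟩ := hS t ht b
    obtain ⟨a, ha⟩ := exists_mul_pow_eq_mul_of_ad_pow_apply_eq_zero hn
    exact ⟨a, t ^ n, pow_mem ht n, ha.symm⟩
  · obtain ⟨n, hn⟩ := hS s hs a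
    exact ⟨s ^ n, pow_mem hs n, mul_pow_eq_zero_of_ad_pow_apply_eq_zero hn hsa⟩

end Adjoint

/- STATEMENT 0:
Let `A` be a (possibly noncommutative) ring and `h` a central element with `h ^ N = 0`
for some `N : ℕ`, such that the quotient `A₀ := A ⧸ (h)` by the two-sided ideal generated
by `h` is commutative.  Since `h` is central, the two-sided ideal generated by `h` is
exactly `{h * y | y : A}`; we encode the quotient by a surjective ring homomorphism
`π : A →+* A₀` onto a commutative ring whose kernel is exactly this ideal.
Given a multiplicative submonoid `S̄` of `A₀` not containing `0`, the preimage
`S = π⁻¹(S̄) = {s : A | π s ∈ S̄}` satisfies the four Ore conditions. -/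
theorem stmt_0 {A : Type*} [Ring A] {A₀ : Type*} [CommRing A₀]
    (h : A) (hcentral : h ∈ Subring.center A) (N : ℕ) (hN : h ^ N = 0)
    (π : A →+* A₀) (hsurj : Function.Surjective π)
    (hker : ∀ x : A, π x = 0 ↔ ∃ y : A, x = h * y)
    (Sbar : Submonoid A₀) (hSbar : (0 : A₀) ∉ Sbar) :
    -- (i) for all a ∈ A and s ∈ S there exist b ∈ A and t ∈ S with t·a = b·s
    (∀ a s : A, π s ∈ Sbar → ∃ b t : A, π t ∈ Sbar ∧ t * a = b * s) ∧
    -- (ii) for all a ∈ A, if a·s = 0 for some s ∈ S then t·a = 0 for some t ∈ S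
    (∀ a : A, (∃ s : A, π s ∈ Sbar ∧ a * s = 0) → ∃ t : A, π t ∈ Sbar ∧ t * a = 0) ∧
    -- (iii) for all b ∈ A and t ∈ S there exist a ∈ A and s ∈ S with t·a = b·s
    (∀ b t : A, π t ∈ Sbar → ∃ a s : A, π s ∈ Sbar ∧ t * a = b * s) ∧
    -- (iv) for all a ∈ A, if s·a = 0 for some s ∈ S then a·t = 0 for some t ∈ S
    (∀ a : A, (∃ s : A, π s ∈ Sbar ∧ s * a = 0) → ∃ t : A, π t ∈ Sbar ∧ a * t = 0) := by
  refine stmt_0_general (R := ℤ) (Sbar.comap π) fun s _ a ↦ ⟨N, ?_⟩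
  have hs : Commute s h := Subring.mem_center_iff.mp hcentral s
  rw [ad_pow_eq_zero_of_dvd_of_map_eq_zero hs hN π fun x ↦ (hker x).mp, LinearMap.zero_apply]
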